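/- Let S be a nonempty set, N : S → ℝ with N(x) ≥ 0 for all x ∈ S, and D : S → ℝ with D(x) > 0 for all x ∈ S. Suppose x* ∈ S attains the maximum of N(x)/D(x) over S with value q*, and suppose that for every q ∈ ℝ the supremum T(q) = sup_{x ∈ S} (N(x) − q·D(x)) is attained at some point of S. Then for any q ∈ ℝ, T(q) = 0 if and only if q = q*. -/

import Mathlib

/-!
Because `D > 0`, the sign of `N x - q * D x` is the sign of `N x / D x - q`. Hence `0` is the
greatest value of `N - q * D` exactly when `q` is the greatest value of `N / D`, and a greatest
value is unique.
-/

section LinearOrderedField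

variable {ι K : Type*} [Field K] [LinearOrder K] [IsStrictOrderedRing K]
  {N D : ι → K} {q qstar t : K}

theorem isGreatest_range_sub_mul_zero_iff_isGreatest_range_div (hD : ∀ x, 0 < D x) :
    IsGreatest (Set.range fun x => N x - q * D x) 0 ↔
      IsGreatest (Set.range fun x => N x / D x) q := by
  have eq_iff (x : ι) : N x - q * D x = 0 ↔ N x / D x = q := by
    rw [sub_eq_zero, div_eq_iff (hD x).ne']
  have le_iff (x : ι) : N x - q * D x ≤ 0 ↔ N x / D x ≤ q := by
    rw [sub_nonpos, div_le_iff₀ (hD x)]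
  simp only [IsGreatest, mem_upperBounds, Set.mem_range, forall_exists_index,
    forall_apply_eq_imp_iff, eq_iff, le_iff]

theorem dinkelbach_root_iff_general (hD : ∀ x, 0 < D x)
    (hqstar : IsGreatest (Set.range fun x => N x / D x) qstar)
    (ht : IsGreatest (Set.range fun x => N x - q * D x) t) :
    t = 0 ↔ q = qstar := by
  rw [← ht.isGreatest_iff_eq, isGreatest_range_sub_mul_zero_iff_isGreatest_range_div hD,
    hqstar.isGreatest_iff_eq, eq_comm]

end LinearOrderedField

/-- Dinkelbach root characterization: if `xs` maximizes the ratio `N x / D x`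
with value `qstar`, and for every `q` the supremum defining
`T q = sup_{x ∈ S} (N x - q * D x)` is attained at some point of `S`, then
`T q = 0 ↔ q = qstar`. -/
theorem dinkelbach_root_iff {S : Type*} [Nonempty S] (N D : S → ℝ)
    (hN : ∀ x, 0 ≤ N x) (hD : ∀ x, 0 < D x)
    (xs : S) (qstar : ℝ) (hqstar : qstar = N xs / D xs)
    (hmax : ∀ x, N x / D x ≤ N xs / D xs)
    (T : ℝ → ℝ) (hT : ∀ q, T q = sSup (Set.range fun x => N x - q * D x))
    (hatt : ∀ q : ℝ, ∃ x : S,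
      IsGreatest (Set.range fun y => N y - q * D y) (N x - q * D x)) :
    ∀ q : ℝ, T q = 0 ↔ q = qstar := by
  intro q
  obtain ⟨x, hx⟩ := hatt q
  rw [hT, hx.csSup_eq]
  exact dinkelbach_root_iff_general hD
    ⟨⟨xs, hqstar.symm⟩, Set.forall_mem_range.2 fun y => hqstar ▸ hmax y⟩ hx
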